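/- Let $f, g \in C(S^n, \mathbb{R})$ be non-constant functions such that for every half space $H = \{x : x\cdot u \ge 0\}$ and every $x, y \in S^n \cap H$, $(f(x) - f(Rx))(g(y) - g(Ry)) \ge 0$, where $R$ is the reflection with respect to $\partial H$. Then $f$ and $g$ are both radial symmetric and decreasing with respect to the same point of $S^n$. -/

import Mathlib

open Metric Set
open scoped RealInnerProductSpace

noncomputable section

/-!
Call `u` a direction of domination of `f` if `f` is at least as large on the side of `u` as at the
mirror images in the hyperplane `uᗮ`. These directions form a closed set, stable under nonnegative
scaling, and the hypothesis says that for every `u` either `f` dominates toward `u` or `g` dominates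
toward `-u`.

If `f` dominated neither toward `u` nor toward `-u`, then neither would it for directions near `u`
or `-u`, so `g` would be symmetric under all reflections near the one in `uᗮ`. Such a function is
locally constant, hence constant. So `f` dominates toward `u` or `-u`, for every `u`.

It follows that the directions of domination form a convex cone. On a circular section of the sphere
parallel to the plane of `u` and `v`, the center of mass of `f` makes a nonnegative inner product
with every direction of domination in this plane, and if the product vanishes then `f` is symmetric
on the circle. Applied to `u`, `v` and `-(u + v)`, this rules out that `f` dominates toward `u` and
`v` but not toward `u + v`.

Separating this closed convex cone from a direction outside it yields a pole `p` such that `f` does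
not dominate toward `-u` when `⟪u, p⟫ > 0`, so that both `f` and `g` dominate toward such `u`. By
closedness they dominate toward `x - y` when `⟪y, p⟫ ≤ ⟪x, p⟫`, and the reflection in `(x - y)ᗮ`
exchanges `x` and `y`.
-/

open Filter Topology

variable {E : Type*} [NormedAddCommGroup E] [InnerProductSpace ℝ E] {f g : E → ℝ} {u v x y : E}

local notation "R[" u "]" => Submodule.reflection (ℝ ∙ u)ᗮ

section Reflection

theorem reflection_orthogonal_span_singleton_apply (u x : E) :
    R[u] x = x - (2 * ⟪x, u⟫ / ‖u‖ ^ 2) • u := by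
  rw [Submodule.reflection_orthogonal_apply, Submodule.reflection_singleton_apply, neg_sub,
    real_inner_comm, ← Nat.cast_smul_eq_nsmul ℝ, smul_smul, mul_div_assoc]
  simp only [Nat.cast_ofNat, RCLike.ofReal_real_eq_id, id_eq]

theorem inner_reflection_orthogonal_span_singleton (u x : E) : ⟪R[u] x, u⟫ = -⟪x, u⟫ := by
  rw [← R[u].inner_map_map x u, Submodule.reflection_orthogonalComplement_singleton_eq_neg,
    inner_neg_right, neg_neg]

theorem reflection_orthogonal_span_singleton_smul {c : ℝ} (hc : c ≠ 0) (u : E) :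
    R[c • u] = R[u] := by
  congr 2
  exact Submodule.span_singleton_smul_eq hc.isUnit u

theorem continuousAt_comp_reflection (hf : ContinuousOn f (sphere 0 1))
    (hx : ‖x‖ = 1) (hu : u ≠ 0) : ContinuousAt (fun v ↦ f (R[v] x)) u := by
  have hsphere (v : E) : R[v] x ∈ sphere (0 : E) 1 := by simpa using hx
  have hcont : ContinuousAt (fun v ↦ R[v] x) u := by
    simp only [reflection_orthogonal_span_singleton_apply]
    have : ‖u‖ ^ 2 ≠ 0 := by simpa using hu
    fun_prop (disch := assumption)
  exact (hf _ (hsphere u)).tendsto.comp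
    (tendsto_nhdsWithin_iff.2 ⟨hcont, Eventually.of_forall hsphere⟩)

end Reflection

/-- `f` is at least as large at every point of the sphere on the side of `u` of the hyperplane `uᗮ`
as at its mirror image. Every function dominates toward `0`. -/
def DominatesToward (f : E → ℝ) (u : E) : Prop :=
  ∀ x, ‖x‖ = 1 → 0 < ⟪x, u⟫ → f (R[u] x) ≤ f x

/-- On the sphere, `f` is symmetric under the reflection in `uᗮ`. -/
def ReflectionInvariant (f : E → ℝ) (u : E) : Prop :=
  ∀ x, ‖x‖ = 1 → f (R[u] x) = f x

theorem ReflectionInvariant.smul (h : ReflectionInvariant f u) {c : ℝ} (hc : c ≠ 0) :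
    ReflectionInvariant f (c • u) := by
  simpa only [ReflectionInvariant, reflection_orthogonal_span_singleton_smul hc] using h

theorem ReflectionInvariant.of_dominatesToward (h : DominatesToward f u)
    (h' : DominatesToward f (-u)) : ReflectionInvariant f u := by
  have hneg : R[-u] = R[u] := by
    simpa using reflection_orthogonal_span_singleton_smul (neg_ne_zero.2 one_ne_zero) u
  have reflect_le (x : E) (hx : ‖x‖ = 1) : f (R[u] x) ≤ f x := by
    rcases lt_trichotomy ⟪x, u⟫ 0 with hxu | hxu | hxu
    · simpa only [hneg] using h' x hx (by simpa using hxu)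
    · simp [reflection_orthogonal_span_singleton_apply, hxu]
    · exact h x hx hxu
  refine fun x hx ↦ (reflect_le x hx).antisymm ?_
  simpa using reflect_le (R[u] x) (by simpa using hx)

namespace DominatesToward

theorem zero (f : E → ℝ) : DominatesToward f 0 := fun x _ hx ↦ by simp at hx

theorem smul (h : DominatesToward f u) {c : ℝ} (hc : 0 ≤ c) : DominatesToward f (c • u) := by
  rcases hc.eq_or_lt with rfl | hc
  · simpa using zero f
  · intro x hx hxu
    rw [reflection_orthogonal_span_singleton_smul hc.ne']
    rw [real_inner_smul_right] at hxu
    exact h x hx (pos_of_mul_pos_right hxu hc.le)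

theorem le_of_sub (h : DominatesToward f (x - y)) (hx : ‖x‖ = 1) (hy : ‖y‖ = 1) : f y ≤ f x := by
  rcases eq_or_ne x y with rfl | hne
  · rfl
  have hpos : 0 < ⟪x, x - y⟫ := by
    rw [inner_sub_right, real_inner_self_eq_norm_sq, hx, one_pow, sub_pos]
    exact (inner_lt_one_iff_real_of_norm_eq_one hx hy).2 hne
  simpa only [Submodule.reflection_sub (hx.trans hy.symm)] using h x hx hpos

theorem sub_mul_inner_nonneg (h : DominatesToward f u) (hx : ‖x‖ = 1) :
    0 ≤ (f x - f (R[u] x)) * ⟪x, u⟫ := by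
  rcases lt_trichotomy ⟪x, u⟫ 0 with hxu | hxu | hxu
  · have := h (R[u] x) (by simpa using hx)
      (by simpa [inner_reflection_orthogonal_span_singleton] using hxu)
    rw [Submodule.reflection_reflection] at this
    exact mul_nonneg_of_nonpos_of_nonpos (sub_nonpos.2 this) hxu.le
  · rw [hxu, mul_zero]
  · exact mul_nonneg (sub_nonneg.2 (h x hx hxu)) hxu.le

theorem isClosed_setOf (hf : ContinuousOn f (sphere 0 1)) :
    IsClosed {u | DominatesToward f u} := by
  refine isOpen_compl_iff.1 (isOpen_iff_eventually.2 fun u hu ↦ ?_)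
  simp only [mem_compl_iff, mem_ofPred_eq, DominatesToward] at hu
  push Not at hu
  obtain ⟨x, hx, hxu, hlt⟩ := hu
  have hu0 : u ≠ 0 := by
    rintro rfl
    simp at hxu
  have hinner : ContinuousAt (fun v ↦ ⟪x, v⟫) u := by fun_prop
  filter_upwards [hinner.eventually_const_lt hxu,
    (continuousAt_comp_reflection hf hx hu0).eventually_const_lt hlt] with v hxv hltv hv
  exact (hv x hx hxv).not_gt hltv

end DominatesToward

section Constancy

theorem exists_forall_mem_eq_of_forall_mem_eq {α β : Type*} [Nonempty β] {s : Set α} {F : α → β}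
    (h : ∀ x ∈ s, ∀ y ∈ s, F x = F y) : ∃ c, ∀ x ∈ s, F x = c := by
  obtain rfl | ⟨x, hx⟩ := s.eq_empty_or_nonempty
  · simp
  · exact ⟨F x, fun y hy ↦ h y hy x hx⟩

theorem exists_inner_ne_zero_and_eventually {P : E → Prop} (h : ∀ᶠ u in 𝓝 v, P u) (hx : x ≠ 0) :
    ∃ u, ⟪x, u⟫ ≠ 0 ∧ ∀ᶠ w in 𝓝 u, P w := by
  by_contra hnot
  have hperp : ((ℝ ∙ x)ᗮ : Set E) ∈ 𝓝 v := by
    filter_upwards [h.eventually_nhds] with u hu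
    by_contra hxu
    exact hnot ⟨u, by rwa [SetLike.mem_coe, Submodule.mem_orthogonal_singleton_iff_inner_right]
      at hxu, hu⟩
  have htop := Submodule.eq_top_of_nonempty_interior' _ ⟨v, mem_interior_iff_mem_nhds.2 hperp⟩
  have hself : x ∈ (ℝ ∙ x)ᗮ := htop ▸ Submodule.mem_top
  exact hx (inner_self_eq_zero.1 (Submodule.mem_orthogonal_singleton_iff_inner_right.1 hself))

/- A point `y` close to `x` is the mirror image of `R[u] x` in a hyperplane close to `uᗮ`. -/
theorem eventually_eq_of_eventually_reflectionInvariant (h : ∀ᶠ u in 𝓝 v, ReflectionInvariant f u)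
    (hx : ‖x‖ = 1) : ∀ᶠ y in 𝓝[sphere 0 1] x, f y = f x := by
  obtain ⟨u, hxu, hu⟩ :=
    exists_inner_ne_zero_and_eventually h (norm_ne_zero_iff.1 (hx.trans_ne one_ne_zero))
  have hu0 : u ≠ 0 := by
    rintro rfl
    simp at hxu
  set c : ℝ := -(2 * ⟪x, u⟫ / ‖u‖ ^ 2)
  have hc : c ≠ 0 := by simp [c, hxu, hu0]
  have hdir : Tendsto (fun y ↦ c⁻¹ • (R[u] x - y)) (𝓝 x) (𝓝 u) := by
    have hcont : Continuous fun y ↦ c⁻¹ • (R[u] x - y) := by fun_prop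
    convert hcont.tendsto x using 2
    rw [eq_inv_smul_iff₀ hc, reflection_orthogonal_span_singleton_apply]
    module
  filter_upwards [nhdsWithin_le_nhds (hdir.eventually hu), self_mem_nhdsWithin] with y hy hy1
  have hRx : ‖R[u] x‖ = 1 := by simpa using hx
  have hinv := hy.smul hc
  rw [smul_inv_smul₀ hc] at hinv
  rw [← hu.self_of_nhds x hx, ← hinv _ hRx,
    Submodule.reflection_sub (hRx.trans (mem_sphere_zero_iff_norm.1 hy1).symm)]

theorem eq_of_eventually_eq_of_ne_neg {V α : Type*} [NormedAddCommGroup V] [NormedSpace ℝ V]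
    {f : V → α} {x y : V} (h : ∀ x, ‖x‖ = 1 → ∀ᶠ y in 𝓝[sphere 0 1] x, f y = f x)
    (hx : ‖x‖ = 1) (hy : ‖y‖ = 1) (hxy : y ≠ -x) : f x = f y := by
  have hne : ∀ z ∈ segment ℝ x y, z ≠ 0 := by
    rintro _ ⟨s, t, hs, ht, hst, rfl⟩ h0
    have hst' : s = t := by
      simpa [norm_smul, hx, hy, abs_of_nonneg, hs, ht] using
        congrArg norm (eq_neg_of_add_eq_zero_left h0)
    obtain rfl : s = 1 / 2 := by linarith
    rw [← hst', ← smul_add, smul_eq_zero_iff_right (by norm_num)] at h0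
    exact hxy (eq_neg_of_add_eq_zero_right h0)
  have hcont : ContinuousOn NormedSpace.normalize (segment ℝ x y) := fun z hz ↦
    ((continuousAt_id.norm.inv₀ (norm_ne_zero_iff.2 (hne z hz))).smul
      continuousAt_id).continuousWithinAt
  have harc := (convex_segment x y).isPreconnected.image _ hcont
  have hsub : NormedSpace.normalize '' segment ℝ x y ⊆ sphere 0 1 := by
    rintro _ ⟨z, hz, rfl⟩
    simpa using NormedSpace.norm_normalize (hne z hz)
  refine harc.induction₂ (fun z w ↦ f z = f w) (fun z hz ↦ ?_)
    (fun _ _ _ _ _ _ ↦ Eq.trans) (fun _ _ _ _ ↦ Eq.symm)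
    ⟨x, left_mem_segment ℝ x y, NormedSpace.normalize_eq_self_of_norm_eq_one hx⟩
    ⟨y, right_mem_segment ℝ x y, NormedSpace.normalize_eq_self_of_norm_eq_one hy⟩
  filter_upwards [nhdsWithin_mono z hsub (h z (by simpa using hsub hz))] with w hw using hw.symm

theorem exists_eq_const_of_eventually_reflectionInvariant
    (h : ∀ᶠ u in 𝓝 v, ReflectionInvariant f u) : ∃ c, ∀ x ∈ sphere (0 : E) 1, f x = c := by
  have eq_of_ne_neg {x y : E} (hx : ‖x‖ = 1) (hy : ‖y‖ = 1) : y ≠ -x → f x = f y :=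
    eq_of_eventually_eq_of_ne_neg
      (fun _ ↦ eventually_eq_of_eventually_reflectionInvariant h) hx hy
  refine exists_forall_mem_eq_of_forall_mem_eq fun x hx y hy ↦ ?_
  rw [mem_sphere_zero_iff_norm] at hx hy
  by_contra hne
  obtain rfl : y = -x := by_contra fun hyx ↦ hne (eq_of_ne_neg hx hy hyx)
  obtain ⟨u, hxu, hu⟩ :=
    exists_inner_ne_zero_and_eventually h (norm_ne_zero_iff.1 (hx.trans_ne one_ne_zero))
  have hfix : R[u] x ≠ x := fun hfix ↦ hxu <| by
    have := inner_reflection_orthogonal_span_singleton u x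
    rw [hfix] at this
    linarith
  rw [← hu.self_of_nhds x hx] at hne
  exact hne (eq_of_ne_neg (by simpa using hx) hy (by simpa [eq_comm] using hfix))

end Constancy

section Circle

open Real

theorem inner_cos_add_sin {a b : E} (ha : ‖a‖ = 1) (hb : ‖b‖ = 1) (hab : ⟪a, b⟫ = 0) (s t : ℝ) :
    ⟪cos s • a + sin s • b, cos t • a + sin t • b⟫ = cos (s - t) := by
  have hba : ⟪b, a⟫ = 0 := by rw [real_inner_comm, hab]
  simp only [inner_add_left, inner_add_right, real_inner_smul_left, real_inner_smul_right,
    real_inner_self_eq_norm_sq, ha, hb, hab, hba, cos_sub]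
  ring

theorem reflection_cos_add_sin {a b : E} (ha : ‖a‖ = 1) (hb : ‖b‖ = 1) (hab : ⟪a, b⟫ = 0)
    (φ θ : ℝ) : R[cos φ • a + sin φ • b] (cos θ • a + sin θ • b) =
      cos (2 * φ + π - θ) • a + sin (2 * φ + π - θ) • b := by
  have hangle : 2 * φ + π - θ = φ - (θ - φ) + π := by ring
  have hcos : cos (2 * φ + π - θ) = cos θ - 2 * cos (θ - φ) * cos φ := by
    have hθ : cos θ = cos (θ - φ) * cos φ - sin (θ - φ) * sin φ := by
      rw [← cos_add, sub_add_cancel]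
    rw [hangle, cos_add_pi, cos_sub φ]
    linear_combination -hθ
  have hsin : sin (2 * φ + π - θ) = sin θ - 2 * cos (θ - φ) * sin φ := by
    have hθ : sin θ = sin (θ - φ) * cos φ + cos (θ - φ) * sin φ := by
      rw [← sin_add, sub_add_cancel]
    rw [hangle, sin_add_pi, sin_sub φ]
    linear_combination -hθ
  rw [reflection_orthogonal_span_singleton_apply, ← real_inner_self_eq_norm_sq,
    inner_cos_add_sin ha hb hab, inner_cos_add_sin ha hb hab, sub_self, cos_zero, div_one, hcos,
    hsin]
  module

theorem exists_eq_mul_cos_and_eq_mul_sin (s t : ℝ) : ∃ r θ : ℝ, s = r * cos θ ∧ t = r * sin θ :=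
  ⟨_, _, (Complex.norm_mul_cos_arg ⟨s, t⟩).symm, (Complex.norm_mul_sin_arg ⟨s, t⟩).symm⟩

/- The circle is the section of the sphere through `x` by the affine plane `x + span {a, b}`. -/
theorem exists_circle {a b : E} (ha : ‖a‖ = 1) (hb : ‖b‖ = 1) (hab : ⟪a, b⟫ = 0) (x : E) :
    ∃ γ : ℝ → E, Continuous γ ∧ γ.Periodic (2 * π) ∧ (∀ θ, ‖γ θ‖ = ‖x‖) ∧ x ∈ range γ ∧
      ∀ u ∈ Submodule.span ℝ {a, b}, u ≠ 0 → ∃ ψ, ∀ θ, R[u] (γ θ) = γ (ψ - θ) := by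
  obtain ⟨r, τ, hs, ht⟩ := exists_eq_mul_cos_and_eq_mul_sin ⟪x, a⟫ ⟪x, b⟫
  set z := x - (r • (cos τ • a + sin τ • b)) with hz
  have hba : ⟪b, a⟫ = 0 := by rw [real_inner_comm, hab]
  have hza : ⟪z, a⟫ = 0 := by
    simp [hz, inner_sub_left, inner_add_left, real_inner_smul_left, hs, ha, hba]
  have hzb : ⟪z, b⟫ = 0 := by
    simp [hz, inner_sub_left, inner_add_left, real_inner_smul_left, ht, hb, hab]
  have hx : z + r • (cos τ • a + sin τ • b) = x := sub_add_cancel ..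
  have norm_sq (θ : ℝ) : ‖z + r • (cos θ • a + sin θ • b)‖ ^ 2 = ‖z‖ ^ 2 + r ^ 2 := by
    have hunit := inner_cos_add_sin ha hb hab θ θ
    rw [sub_self, cos_zero, real_inner_self_eq_norm_sq] at hunit
    rw [norm_add_sq_real, norm_smul, mul_pow, hunit, real_inner_smul_right, inner_add_right,
      real_inner_smul_right, real_inner_smul_right, hza, hzb, norm_eq_abs, sq_abs]
    ring
  refine ⟨fun θ ↦ z + r • (cos θ • a + sin θ • b), by fun_prop, fun θ ↦ by simp, fun θ ↦ ?_,
    ⟨τ, hx⟩, fun u hu hu0 ↦ ?_⟩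
  · rw [← sq_eq_sq₀ (norm_nonneg _) (norm_nonneg _), norm_sq, ← hx, norm_sq]
  · obtain ⟨s, t, rfl⟩ := Submodule.mem_span_pair.1 hu
    obtain ⟨ρ, φ, rfl, rfl⟩ := exists_eq_mul_cos_and_eq_mul_sin s t
    rw [mul_smul, mul_smul, ← smul_add] at hu0 ⊢
    have hρ : ρ ≠ 0 := left_ne_zero_of_smul hu0
    have hfix : R[cos φ • a + sin φ • b] z = z := by
      simp [reflection_orthogonal_span_singleton_apply, inner_add_right, real_inner_smul_right,
        hza, hzb]
    refine ⟨2 * φ + π, fun θ ↦ ?_⟩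
    rw [reflection_orthogonal_span_singleton_smul hρ, map_add, map_smul, hfix,
      reflection_cos_add_sin ha hb hab]

variable [CompleteSpace E] {γ : ℝ → E}

/-- The unnormalized center of mass of the density `f` on the closed curve `γ`. -/
def curveCenter (f : E → ℝ) (γ : ℝ → E) : E :=
  ∫ θ in (0)..(2 * π), f (γ θ) • γ θ

theorem inner_curveCenter (hfγ : Continuous (f ∘ γ)) (hγ : Continuous γ) (u : E) :
    ⟪curveCenter f γ, u⟫ = ∫ θ in (0)..(2 * π), f (γ θ) * ⟪γ θ, u⟫ := by
  have hint : IntervalIntegrable (fun θ ↦ f (γ θ) • γ θ) MeasureTheory.volume 0 (2 * π) :=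
    (hfγ.smul hγ).intervalIntegrable _ _
  rw [real_inner_comm, curveCenter, ← innerSL_apply_apply ℝ,
    ← (innerSL ℝ u).intervalIntegral_comp_comm hint]
  simp only [innerSL_apply_apply, real_inner_smul_right, real_inner_comm u]

theorem two_mul_inner_curveCenter (hfγ : Continuous (f ∘ γ)) (hγ : Continuous γ)
    (hper : γ.Periodic (2 * π)) {ψ : ℝ} (hψ : ∀ θ, R[u] (γ θ) = γ (ψ - θ)) :
    2 * ⟪curveCenter f γ, u⟫ =
      ∫ θ in (0)..(2 * π), (f (γ θ) - f (R[u] (γ θ))) * ⟪γ θ, u⟫ := by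
  set F : ℝ → ℝ := fun θ ↦ f (γ θ) * ⟪γ θ, u⟫
  have hF : Continuous F := hfγ.mul (hγ.inner continuous_const)
  have hperiodic : F.Periodic (2 * π) := fun θ ↦ by simp only [F, hper θ]
  have hreflect (θ : ℝ) : (f (γ θ) - f (R[u] (γ θ))) * ⟪γ θ, u⟫ = F θ + F (ψ - θ) := by
    simp only [F, ← hψ, inner_reflection_orthogonal_span_singleton]
    ring
  have hsymm : ∫ θ in (0)..(2 * π), F (ψ - θ) = ∫ θ in (0)..(2 * π), F θ := by
    rw [intervalIntegral.integral_comp_sub_left F]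
    convert hperiodic.intervalIntegral_add_eq (ψ - 2 * π) 0 using 2 <;> ring
  simp only [hreflect]
  rw [intervalIntegral.integral_add (hF.intervalIntegrable _ _)
    ((by fun_prop : Continuous fun θ ↦ F (ψ - θ)).intervalIntegrable _ _), hsymm,
    ← inner_curveCenter hfγ hγ, two_mul]

namespace DominatesToward

theorem inner_curveCenter_nonneg (h : DominatesToward f u) (hfγ : Continuous (f ∘ γ))
    (hγ : Continuous γ) (hper : γ.Periodic (2 * π)) (hnorm : ∀ θ, ‖γ θ‖ = 1) {ψ : ℝ}
    (hψ : ∀ θ, R[u] (γ θ) = γ (ψ - θ)) : 0 ≤ ⟪curveCenter f γ, u⟫ := by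
  refine nonneg_of_mul_nonneg_right (a := 2) ?_ two_pos
  rw [two_mul_inner_curveCenter hfγ hγ hper hψ]
  exact intervalIntegral.integral_nonneg two_pi_pos.le fun θ _ ↦ h.sub_mul_inner_nonneg (hnorm θ)

theorem reflection_eq_of_inner_curveCenter_eq_zero (h : DominatesToward f u)
    (hfγ : Continuous (f ∘ γ)) (hγ : Continuous γ) (hper : γ.Periodic (2 * π))
    (hnorm : ∀ θ, ‖γ θ‖ = 1) {ψ : ℝ} (hψ : ∀ θ, R[u] (γ θ) = γ (ψ - θ))
    (hzero : ⟪curveCenter f γ, u⟫ = 0) (θ : ℝ) : f (R[u] (γ θ)) = f (γ θ) := by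
  set G : ℝ → ℝ := fun θ ↦ (f (γ θ) - f (R[u] (γ θ))) * ⟪γ θ, u⟫ with hG
  have hcont : Continuous G := by
    simp only [hG, hψ]
    exact (hfγ.sub (hfγ.comp (continuous_sub_left ψ))).mul (hγ.inner continuous_const)
  have hperiodic : G.Periodic (2 * π) := fun θ ↦ by simp only [G, hper θ]
  have hvanish : G θ = 0 := by
    obtain ⟨η, hη, hθη⟩ := hperiodic.exists_mem_Ico₀ two_pi_pos θ
    rw [hθη]
    refine (h.sub_mul_inner_nonneg (hnorm η)).eq_of_not_lt' fun hpos ↦ ?_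
    have := intervalIntegral.integral_pos two_pi_pos hcont.continuousOn
      (fun t _ ↦ h.sub_mul_inner_nonneg (hnorm t)) ⟨η, Ico_subset_Icc_self hη, hpos⟩
    rw [← two_mul_inner_curveCenter hfγ hγ hper hψ, hzero] at this
    simp at this
  rcases mul_eq_zero.1 hvanish with heq | hperp
  · exact (sub_eq_zero.1 heq).symm
  · simp [reflection_orthogonal_span_singleton_apply, hperp]

theorem add_of_mem_span {a b : E} (ha : ‖a‖ = 1) (hb : ‖b‖ = 1) (hab : ⟪a, b⟫ = 0)
    (hf : ContinuousOn f (sphere 0 1)) (total : ∀ w, DominatesToward f w ∨ DominatesToward f (-w))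
    (hu : DominatesToward f u) (hv : DominatesToward f v) (hua : u ∈ Submodule.span ℝ {a, b})
    (hva : v ∈ Submodule.span ℝ {a, b}) : DominatesToward f (u + v) := by
  intro x hx hxw
  obtain ⟨γ, hγ, hper, hnorm, ⟨θ, rfl⟩, hreflect⟩ := exists_circle ha hb hab x
  rw [hx] at hnorm
  have hfγ : Continuous (f ∘ γ) :=
    hf.comp_continuous hγ fun θ ↦ mem_sphere_zero_iff_norm.2 (hnorm θ)
  have center_nonneg {w : E} (hw : DominatesToward f w) (hwa : w ∈ Submodule.span ℝ {a, b}) :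
      0 ≤ ⟪curveCenter f γ, w⟫ := by
    rcases eq_or_ne w 0 with rfl | hw0
    · rw [inner_zero_right]
    · obtain ⟨ψ, hψ⟩ := hreflect w hwa hw0
      exact hw.inner_curveCenter_nonneg hfγ hγ hper hnorm hψ
  rcases total (u + v) with hw | hw
  · exact hw _ hx hxw
  have hwa := add_mem hua hva
  have hzero : ⟪curveCenter f γ, -(u + v)⟫ = 0 := by
    have hw_nonneg := center_nonneg hw (neg_mem hwa)
    have hu_nonneg := center_nonneg hu hua
    have hv_nonneg := center_nonneg hv hva
    rw [inner_neg_right, inner_add_right] at hw_nonneg ⊢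
    linarith
  have hw0 : u + v ≠ 0 := by
    intro hw0
    simp [hw0] at hxw
  obtain ⟨ψ, hψ⟩ := hreflect _ (neg_mem hwa) (neg_ne_zero.2 hw0)
  rw [← reflection_orthogonal_span_singleton_smul (neg_ne_zero.2 one_ne_zero) (u + v),
    neg_one_smul]
  exact (hw.reflection_eq_of_inner_curveCenter_eq_zero hfγ hγ hper hnorm hψ hzero θ).le

end DominatesToward

end Circle

section Cone

theorem exists_orthonormal_pair_span_eq {u v : E} (h : LinearIndependent ℝ ![u, v]) :
    ∃ a b : E, ‖a‖ = 1 ∧ ‖b‖ = 1 ∧ ⟪a, b⟫ = 0 ∧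
      Submodule.span ℝ {a, b} = Submodule.span ℝ {u, v} := by
  have horth := InnerProductSpace.gramSchmidtNormed_orthonormal h
  refine ⟨_, _, horth.norm_eq_one 0, horth.norm_eq_one 1, horth.inner_eq_zero zero_ne_one, ?_⟩
  have hspan := (InnerProductSpace.span_gramSchmidtNormed_range (𝕜 := ℝ) ![u, v]).trans
    (InnerProductSpace.span_gramSchmidt ℝ ![u, v])
  have range_eq (w : Fin 2 → E) : range w = {w 0, w 1} := by
    ext
    simp [Fin.exists_fin_two, eq_comm]
  rwa [range_eq, range_eq] at hspan

theorem exists_eq_const_of_forall_dominatesToward (h : ∀ u, DominatesToward f u) :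
    ∃ c, ∀ x ∈ sphere (0 : E) 1, f x = c := by
  refine exists_forall_mem_eq_of_forall_mem_eq fun x hx y hy ↦ ?_
  rw [mem_sphere_zero_iff_norm] at hx hy
  exact ((h (y - x)).le_of_sub hy hx).antisymm ((h (x - y)).le_of_sub hx hy)

variable [CompleteSpace E]

theorem DominatesToward.add (hf : ContinuousOn f (sphere 0 1))
    (total : ∀ w, DominatesToward f w ∨ DominatesToward f (-w)) (hu : DominatesToward f u)
    (hv : DominatesToward f v) : DominatesToward f (u + v) := by
  rcases eq_or_ne u 0 with rfl | hu0
  · rwa [zero_add]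
  by_cases hli : LinearIndependent ℝ ![u, v]
  · obtain ⟨a, b, ha, hb, hab, hspan⟩ := exists_orthonormal_pair_span_eq hli
    exact add_of_mem_span ha hb hab hf total hu hv
      (hspan ▸ Submodule.mem_span_of_mem (mem_insert u {v}))
      (hspan ▸ Submodule.mem_span_of_mem (mem_insert_of_mem u rfl))
  · obtain ⟨c, rfl⟩ : ∃ c : ℝ, c • u = v := by
      simpa only [LinearIndependent.pair_iff' hu0, not_forall, not_not] using hli
    rcases le_total 0 (1 + c) with hc | hc
    · simpa only [add_smul, one_smul] using hu.smul hc
    · have hc0 : c < 0 := by linarith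
      have hcinv : 0 ≤ 1 + c⁻¹ := by
        have := mul_nonneg_of_nonpos_of_nonpos hc (inv_lt_zero.2 hc0).le
        rwa [add_mul, one_mul, mul_inv_cancel₀ hc0.ne, add_comm] at this
      simpa only [add_smul, one_smul, inv_smul_smul₀ hc0.ne, add_comm] using hv.smul hcinv

/-- The closed convex cone of the directions toward which `f` dominates. -/
def dominationCone (f : E → ℝ) (hf : ContinuousOn f (sphere 0 1))
    (total : ∀ u, DominatesToward f u ∨ DominatesToward f (-u)) : ProperCone ℝ E where
  carrier := {u | DominatesToward f u}
  zero_mem' := .zero f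
  add_mem' := .add hf total
  smul_mem' c _ hu := hu.smul c.2
  isClosed' := DominatesToward.isClosed_setOf hf

theorem exists_pole (hf : ContinuousOn f (sphere 0 1))
    (hfc : ¬∃ c, ∀ x ∈ sphere (0 : E) 1, f x = c)
    (total : ∀ u, DominatesToward f u ∨ DominatesToward f (-u)) :
    ∃ p : E, ‖p‖ = 1 ∧ ∀ u, 0 < ⟪u, p⟫ → ¬DominatesToward f (-u) := by
  obtain ⟨v, hv⟩ : ∃ v, ¬DominatesToward f v := by
    by_contra! hall
    exact hfc (exists_eq_const_of_forall_dominatesToward hall)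
  obtain ⟨q, hq, hqv⟩ := (dominationCone f hf total).hyperplane_separation' hv
  have hq0 : q ≠ 0 := by
    rintro rfl
    simp at hqv
  refine ⟨NormedSpace.normalize q, NormedSpace.norm_normalize hq0, fun u hu hneg ↦ ?_⟩
  have hu_nonpos := hq _ hneg
  rw [inner_neg_left, ← NormedSpace.norm_smul_normalize q, real_inner_smul_right] at hu_nonpos
  linarith [mul_pos (norm_pos_iff.2 hq0) hu]

end Cone

section Radial

theorem DominatesToward.of_inner_nonneg (hf : ContinuousOn f (sphere 0 1)) {p : E} (hp : p ≠ 0)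
    (h : ∀ u, 0 < ⟪u, p⟫ → DominatesToward f u) (hu : 0 ≤ ⟪u, p⟫) : DominatesToward f u := by
  have hlim : Tendsto (fun ε : ℝ ↦ u + ε • p) (𝓝[>] 0) (𝓝 u) := by
    have hcont : Continuous fun ε : ℝ ↦ u + ε • p := by fun_prop
    simpa using (hcont.tendsto 0).mono_left nhdsWithin_le_nhds
  refine (isClosed_setOf hf).mem_of_tendsto hlim ?_
  filter_upwards [self_mem_nhdsWithin] with ε hε
  refine h _ ?_
  rw [inner_add_left, real_inner_smul_left]
  exact add_pos_of_nonneg_of_pos hu (mul_pos hε (real_inner_self_pos.2 hp))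

theorem exists_monotoneOn_profile {p : E} (hp : ‖p‖ = 1)
    (h : ∀ x y : E, ‖x‖ = 1 → ‖y‖ = 1 → ⟪y, p⟫ ≤ ⟪x, p⟫ → f y ≤ f x) :
    ∃ φ : ℝ → ℝ, MonotoneOn φ (Icc (-1) 1) ∧ ∀ x ∈ sphere (0 : E) 1, f x = φ ⟪x, p⟫ := by
  simp only [mem_sphere_zero_iff_norm]
  have hpp : ⟪p, p⟫ = 1 := by rw [real_inner_self_eq_norm_sq, hp, one_pow]
  have inner_le (z : E) (hz : ‖z‖ = 1) : ⟪z, p⟫ ≤ 1 := by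
    simpa [hz, hp] using real_inner_le_norm z p
  refine ⟨fun t ↦ sSup (f '' {z | ‖z‖ = 1 ∧ ⟪z, p⟫ ≤ t}), fun s hs t _ hst ↦ ?_, fun x hx ↦ ?_⟩
  · refine csSup_le_csSup ⟨f p, ?_⟩ ⟨f (-p), mem_image_of_mem f ⟨by simpa using hp, ?_⟩⟩ ?_
    · rintro _ ⟨z, hz, rfl⟩
      exact h p z hp hz.1 (hpp ▸ inner_le z hz.1)
    · simpa only [inner_neg_left, hpp] using hs.1
    · exact image_mono fun z hz ↦ ⟨hz.1, hz.2.trans hst⟩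
  · have hmem : x ∈ {z | ‖z‖ = 1 ∧ ⟪z, p⟫ ≤ ⟪x, p⟫} := ⟨hx, le_rfl⟩
    refine (IsGreatest.csSup_eq ⟨mem_image_of_mem f hmem, ?_⟩).symm
    rintro _ ⟨z, hz, rfl⟩
    exact h x z hx hz.1 hz.2

theorem exists_monotoneOn_profile_of_dominatesToward (hf : ContinuousOn f (sphere 0 1)) {p : E}
    (hp : ‖p‖ = 1) (h : ∀ u, 0 < ⟪u, p⟫ → DominatesToward f u) :
    ∃ φ : ℝ → ℝ, MonotoneOn φ (Icc (-1) 1) ∧ ∀ x ∈ sphere (0 : E) 1, f x = φ ⟪x, p⟫ := by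
  refine exists_monotoneOn_profile hp fun x y hx hy hyx ↦ ?_
  have hxy : 0 ≤ ⟪x - y, p⟫ := by rwa [inner_sub_left, sub_nonneg]
  exact (DominatesToward.of_inner_nonneg hf (norm_ne_zero_iff.1 (hp.trans_ne one_ne_zero)) h
    hxy).le_of_sub hx hy

end Radial

section Pair

theorem dominatesToward_or_dominatesToward_neg
    (h : ∀ u : E, ‖u‖ = 1 → ∀ x ∈ sphere (0 : E) 1, ∀ y ∈ sphere (0 : E) 1,
      0 ≤ ⟪x, u⟫ → 0 ≤ ⟪y, u⟫ →
        0 ≤ (f x - f (x - (2 * ⟪x, u⟫) • u)) * (g y - g (y - (2 * ⟪y, u⟫) • u))) (u : E) :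
    DominatesToward f u ∨ DominatesToward g (-u) := by
  by_contra! hnot
  simp only [DominatesToward] at hnot
  push Not at hnot
  obtain ⟨⟨x, hx, hxu, hfx⟩, y, hy, hyu, hgy⟩ := hnot
  have hu0 : u ≠ 0 := by
    rintro rfl
    simp at hxu
  set e := NormedSpace.normalize u
  have he : ‖e‖ = 1 := NormedSpace.norm_normalize hu0
  have hue : u = ‖u‖ • e := (NormedSpace.norm_smul_normalize u).symm
  have hu : 0 < ‖u‖ := norm_pos_iff.2 hu0
  have reflect (z : E) : z - (2 * ⟪z, e⟫) • e = R[e] z := by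
    simp [reflection_orthogonal_span_singleton_apply, he]
  rw [hue, reflection_orthogonal_span_singleton_smul hu.ne'] at hfx
  rw [hue, ← neg_smul, reflection_orthogonal_span_singleton_smul (neg_ne_zero.2 hu.ne')] at hgy
  rw [hue, real_inner_smul_right] at hxu
  rw [hue, ← neg_smul, real_inner_smul_right] at hyu
  have hxe : 0 ≤ ⟪x, e⟫ := (pos_of_mul_pos_right hxu hu.le).le
  have hye : 0 ≤ ⟪R[e] y, e⟫ := by
    rw [inner_reflection_orthogonal_span_singleton]
    rw [neg_mul_comm] at hyu
    exact (pos_of_mul_pos_right hyu hu.le).le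
  have hprod := h e he x (by simpa using hx) (R[e] y) (by simpa using hy) hxe hye
  rw [reflect, reflect, Submodule.reflection_reflection] at hprod
  exact hprod.not_gt (mul_neg_of_neg_of_pos (sub_neg.2 hfx) (sub_pos.2 hgy))

theorem dominatesToward_total (hf : ContinuousOn f (sphere 0 1))
    (hgc : ¬∃ c, ∀ x ∈ sphere (0 : E) 1, g x = c)
    (hfg : ∀ u, DominatesToward f u ∨ DominatesToward g (-u)) (u : E) :
    DominatesToward f u ∨ DominatesToward f (-u) := by
  have hopen := (DominatesToward.isClosed_setOf hf).isOpen_compl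
  by_contra! hnot
  refine hgc (exists_eq_const_of_eventually_reflectionInvariant (v := u) ?_)
  filter_upwards [hopen.mem_nhds hnot.1, continuous_neg.continuousAt (hopen.mem_nhds hnot.2)]
    with v hv hv'
  refine .of_dominatesToward ?_ ((hfg v).resolve_left hv)
  simpa only [neg_neg] using (hfg (-v)).resolve_left hv'

end Pair

theorem stmt_7_general [CompleteSpace E] (hf : ContinuousOn f (sphere 0 1))
    (hg : ContinuousOn g (sphere 0 1)) (hfc : ¬∃ c, ∀ x ∈ sphere (0 : E) 1, f x = c)
    (hgc : ¬∃ c, ∀ x ∈ sphere (0 : E) 1, g x = c)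
    (h : ∀ u : E, ‖u‖ = 1 → ∀ x ∈ sphere (0 : E) 1, ∀ y ∈ sphere (0 : E) 1,
      0 ≤ ⟪x, u⟫ → 0 ≤ ⟪y, u⟫ →
        0 ≤ (f x - f (x - (2 * ⟪x, u⟫) • u)) * (g y - g (y - (2 * ⟪y, u⟫) • u))) :
    ∃ p ∈ sphere (0 : E) 1,
      (∃ φ : ℝ → ℝ, MonotoneOn φ (Icc (-1) 1) ∧ ∀ x ∈ sphere (0 : E) 1, f x = φ ⟪x, p⟫) ∧
      ∃ ψ : ℝ → ℝ, MonotoneOn ψ (Icc (-1) 1) ∧ ∀ x ∈ sphere (0 : E) 1, g x = ψ ⟪x, p⟫ := by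
  have hfg (u : E) : DominatesToward f u ∨ DominatesToward g (-u) :=
    dominatesToward_or_dominatesToward_neg h u
  have total := dominatesToward_total hf hgc hfg
  obtain ⟨p, hp, hpole⟩ := exists_pole hf hfc total
  have hposf (u : E) (hu : 0 < ⟪u, p⟫) : DominatesToward f u :=
    (total u).resolve_right (hpole u hu)
  have hposg (u : E) (hu : 0 < ⟪u, p⟫) : DominatesToward g u := by
    simpa only [neg_neg] using (hfg (-u)).resolve_left (hpole u hu)
  exact ⟨p, mem_sphere_zero_iff_norm.2 hp,
    exists_monotoneOn_profile_of_dominatesToward hf hp hposf,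
    exists_monotoneOn_profile_of_dominatesToward hg hp hposg⟩

/-- If non-constant `f, g ∈ C(Sⁿ)` satisfy, for every half space `H = {x : x·u ≥ 0}` and all
`x, y ∈ Sⁿ ∩ H`, `(f(x) - f(Rx))(g(y) - g(Ry)) ≥ 0` where `R` is the reflection in `∂H`,
then `f` and `g` are radial symmetric and decreasing with respect to the same point. -/
theorem stmt_7 (n : ℕ) (f g : EuclideanSpace ℝ (Fin (n + 1)) → ℝ)
    (hf : ContinuousOn f (sphere (0 : EuclideanSpace ℝ (Fin (n + 1))) 1))
    (hg : ContinuousOn g (sphere (0 : EuclideanSpace ℝ (Fin (n + 1))) 1))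
    (hfc : ¬ ∃ c : ℝ, ∀ x ∈ sphere (0 : EuclideanSpace ℝ (Fin (n + 1))) 1, f x = c)
    (hgc : ¬ ∃ c : ℝ, ∀ x ∈ sphere (0 : EuclideanSpace ℝ (Fin (n + 1))) 1, g x = c)
    (h : ∀ u : EuclideanSpace ℝ (Fin (n + 1)), ‖u‖ = 1 →
      ∀ x ∈ sphere (0 : EuclideanSpace ℝ (Fin (n + 1))) 1,
      ∀ y ∈ sphere (0 : EuclideanSpace ℝ (Fin (n + 1))) 1,
        0 ≤ ⟪x, u⟫ → 0 ≤ ⟪y, u⟫ →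
        0 ≤ (f x - f (x - (2 * ⟪x, u⟫) • u)) * (g y - g (y - (2 * ⟪y, u⟫) • u))) :
    ∃ p ∈ sphere (0 : EuclideanSpace ℝ (Fin (n + 1))) 1,
      (∃ φ : ℝ → ℝ, MonotoneOn φ (Icc (-1 : ℝ) 1) ∧
        ∀ x ∈ sphere (0 : EuclideanSpace ℝ (Fin (n + 1))) 1, f x = φ ⟪x, p⟫) ∧
      (∃ ψ : ℝ → ℝ, MonotoneOn ψ (Icc (-1 : ℝ) 1) ∧
        ∀ x ∈ sphere (0 : EuclideanSpace ℝ (Fin (n + 1))) 1, g x = ψ ⟪x, p⟫) :=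
  stmt_7_general hf hg hfc hgc h
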